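/- arXiv:1201.1633 — 2 statements merged into one kernel-verified Lean document; each statement's English description precedes it below -/
import Mathlib

section
/- Let Σ be an alphabet with |Σ| ≥ 2 and let δ be a uniform integer-valued Hamming compatible metric on Σ*. Then δ(u,v) ≥ d_2(u,v) for all words u, v ∈ Σ*, where d_2(u,v) = H(ū,v̄) + ⌈|l(u) − l(v)|/2⌉. -/
/-- The truncated Hamming function `H(ū,v̄)`: the Hamming distance between the
first `min (l u) (l v)` letters of `u` and of `v` (computed via `zip`, which
truncates to the common length).  For words of equal length it is the usual
Hamming distance. -/
def hamming {α : Type*} [DecidableEq α] (u v : List α) : ℕ :=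
  (u.zip v).countP (fun p => decide (p.1 ≠ p.2))

/-- The metric `d₂(u,v) = H(ū,v̄) + ⌈|l(u) − l(v)|/2⌉`
(note `⌈m/2⌉ = (m + 1)/2` in natural-number division). -/
def d2 {α : Type*} [DecidableEq α] (u v : List α) : ℕ :=
  hamming u v + (Nat.dist u.length v.length + 1) / 2

theorem ham_cons_aux {A : Type*} [DecidableEq A] (a b : A) (u v : List A) :
    hamming (a :: u) (b :: v) = hamming u v + if a ≠ b then 1 else 0 := by
  simp [hamming, List.countP_cons]

theorem ham_symm_aux {A : Type*} [DecidableEq A] : ∀ u v : List A, hamming u v = hamming v u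
  | [], [] => rfl
  | [], _ :: _ => by simp [hamming]
  | _ :: _, [] => by simp [hamming]
  | a :: u, b :: v => by
    rw [ham_cons_aux, ham_cons_aux, ham_symm_aux u v]
    simp only [ne_comm]

theorem ham_opp_aux {A : Type*} [DecidableEq A] (h : ∀ a : A, ∃ b, b ≠ a) :
    ∀ v u : List A, u.length ≤ v.length → ∃ w : List A, v.length = w.length ∧
      hamming v w = v.length ∧ hamming v u + hamming w u = u.length
  | [], [], _ => ⟨[], by simp [hamming]⟩
  | [], _ :: _, hl => by simp at hl
  | a :: v, [], _ => by
    obtain ⟨w, h1, h2, h3⟩ := ham_opp_aux h v [] (by simp)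
    obtain ⟨b, hb⟩ := h a
    refine ⟨b :: w, by simp [h1], ?_, by simp [hamming]⟩
    rw [ham_cons_aux, h2, if_pos hb.symm]; simp
  | a :: v, c :: u, hl => by
    obtain ⟨w, h1, h2, h3⟩ := ham_opp_aux h v u (by simpa using hl)
    by_cases hac : a = c
    · obtain ⟨b, hb⟩ := h a
      have hbc : b ≠ c := hac ▸ hb
      refine ⟨b :: w, by simp [h1], ?_, ?_⟩
      · rw [ham_cons_aux, h2, if_pos hb.symm]; simp
      · rw [ham_cons_aux, ham_cons_aux, if_pos hbc]
        simp [hac]; omega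
    · refine ⟨c :: w, by simp [h1], ?_, ?_⟩
      · rw [ham_cons_aux, h2, if_pos hac]; simp
      · rw [ham_cons_aux, ham_cons_aux, if_pos hac]
        simp; omega

theorem stmt_13 {A : Type*} [DecidableEq A] [Fintype A]
    (hA : 2 ≤ Fintype.card A)
    (δ : List A → List A → ℕ)
    -- δ is a metric on Σ*
    (hrefl : ∀ u v : List A, δ u v = 0 ↔ u = v)
    (hsymm : ∀ u v : List A, δ u v = δ v u)
    (htri : ∀ u v w : List A, δ u v ≤ δ u w + δ w v)
    -- δ is Hamming compatible
    (hcompat : ∀ u v : List A, u.length = v.length → δ u v = hamming u v)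
    -- δ is uniform: writing δ(u,w) = H(ū,w̄) + γ(u,w), for Hamming opposites
    -- u, v and any word w we have γ(u,w) = γ(v,w); stated additively to avoid
    -- truncated subtraction.
    (hunif : ∀ u v w : List A, u.length = v.length → hamming u v = u.length →
      δ u w + hamming v w = δ v w + hamming u w) :
    ∀ u v : List A, d2 u v ≤ δ u v := by
  have hne : ∀ a : A, ∃ b, b ≠ a := by
    have : Nontrivial A := Fintype.one_lt_card_iff_nontrivial.mp hA
    exact fun a => exists_ne a
  have key : ∀ u v : List A, u.length ≤ v.length →
      2 * hamming v u + (v.length - u.length) ≤ 2 * δ v u := by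
    intro u v hl
    obtain ⟨w, h1, h2, h3⟩ := ham_opp_aux hne v u hl
    have e1 := hunif v w u h1 h2
    have e2 := htri v w u
    rw [hcompat v w h1, h2, hsymm u w] at e2
    omega
  intro u v
  unfold d2 Nat.dist
  rcases le_total u.length v.length with hl | hl
  · have := key u v hl
    rw [ham_symm_aux u v, hsymm u v]
    omega
  · have := key v u hl
    omega
end

section
/- Let Σ be an alphabet with N = |Σ| ≥ 2 letters, and let u, w ∈ Σ* with n = l(u) ≥ m = l(w). Set h = H(ū,w̄). Then the number of Hamming opposites v of u satisfying H(ū,w̄) + H(v̄,w̄) = l(w) is exactly (N − 1)^{n − h}. -/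
theorem ham_cons {A : Type*} [DecidableEq A] (a b : A) (u v : List A) :
    hamming (a :: u) (b :: v) = hamming u v + if a = b then 0 else 1 := by
  unfold hamming
  by_cases h : a = b <;> simp [h]

theorem ham_nil {A : Type*} [DecidableEq A] (u : List A) : hamming u [] = 0 := by
  simp [hamming]

theorem ham_nil_left {A : Type*} [DecidableEq A] (u : List A) : hamming [] u = 0 := by
  simp [hamming]

theorem ham_le {A : Type*} [DecidableEq A] (u v : List A) : hamming u v ≤ u.length := by
  unfold hamming
  refine List.countP_le_length.trans ?_
  simp

theorem ham_ge {A : Type*} [DecidableEq A] (u : List A) : ∀ v w : List A,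
    v.length = u.length → hamming u v = u.length → w.length ≤ u.length →
    w.length ≤ hamming u w + hamming v w := by
  induction u with
  | nil => intro v w h1 h2 h3; simp at h3; simp [h3]
  | cons a u ih =>
    intro v w h1 h2 h3
    cases v with
    | nil => simp at h1
    | cons c v =>
      cases w with
      | nil => simp
      | cons b w =>
        have := ham_le u v
        have ih' := ih v w
        simp only [ham_cons, List.length_cons] at *
        grind

def opp {A : Type*} [DecidableEq A] (u w : List A) : Set (List A) :=
  {v | v.length = u.length ∧ hamming u v = u.length ∧ hamming u w + hamming v w = w.length}

theorem ncard_cons {A : Type*} (X : Set A) (Y : Set (List A)) :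
    ((fun p : A × List A => p.1 :: p.2) '' (X ×ˢ Y)).ncard = X.ncard * Y.ncard := by
  rw [Set.ncard_image_of_injective, Set.ncard_prod]
  rintro ⟨a, b⟩ ⟨c, d⟩ h
  simpa using h

theorem ncard_ne {A : Type*} [Fintype A] (a : A) :
    ({c | c ≠ a} : Set A).ncard = Fintype.card A - 1 := by
  classical
  have : ({c | c ≠ a} : Set A) = ((Finset.univ.erase a : Finset A) : Set A) := by ext; simp
  rw [this, Set.ncard_coe_finset, Finset.card_erase_of_mem (Finset.mem_univ a), Finset.card_univ]

theorem opp_nil {A : Type*} [DecidableEq A] (a : A) (u : List A) :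
    opp (a :: u) [] = (fun p : A × List A => p.1 :: p.2) '' ({c | c ≠ a} ×ˢ opp u []) := by
  ext v
  cases v with
  | nil => simp [opp]
  | cons c v =>
    have := ham_le u v
    simp [opp, ham_cons, ham_nil]
    grind

theorem opp_eq {A : Type*} [DecidableEq A] (a : A) (u w : List A) :
    opp (a :: u) (a :: w) = (fun p : A × List A => p.1 :: p.2) '' ({c | c ≠ a} ×ˢ opp u w) := by
  ext v
  cases v with
  | nil => simp [opp]
  | cons c v =>
    have := ham_le u v
    simp [opp, ham_cons]
    grind

theorem opp_ne {A : Type*} [DecidableEq A] (a b : A) (hab : a ≠ b) (u w : List A)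
    (hw : w.length ≤ u.length) :
    opp (a :: u) (b :: w) = (fun p : A × List A => p.1 :: p.2) '' ({b} ×ˢ opp u w) := by
  ext v
  cases v with
  | nil => simp [opp]
  | cons c v =>
    have := ham_le u v
    have h2 := ham_ge u v w
    simp [opp, ham_cons, hab]
    grind

theorem opp_card {A : Type*} [DecidableEq A] [Fintype A] (u : List A) : ∀ w : List A,
    w.length ≤ u.length →
    (opp u w).ncard = (Fintype.card A - 1) ^ (u.length - hamming u w) := by
  induction u with
  | nil =>
    intro w hw
    have : w = [] := by simpa using hw
    subst this
    have : opp ([] : List A) [] = {[]} := by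
      ext v
      simp only [opp, ham_nil, ham_nil_left, Set.mem_setOf_eq, Set.mem_singleton_iff]
      simp
    simp [this]
  | cons a u ih =>
    intro w hw
    cases w with
    | nil =>
      rw [opp_nil, ncard_cons, ncard_ne, ih [] (by simp)]
      simp [ham_nil, pow_succ, mul_comm]
    | cons b w =>
      have hw' : w.length ≤ u.length := by simpa using hw
      have hl := ham_le u w
      by_cases hab : a = b
      · subst hab
        rw [opp_eq, ncard_cons, ncard_ne, ih w hw', ham_cons, ← pow_succ']
        congr 1
        simp
        omega
      · rw [opp_ne a b hab u w hw', ncard_cons, ih w hw', ham_cons]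
        simp [hab]

theorem stmt_15 {A : Type*} [DecidableEq A] [Fintype A]
    (N : ℕ) (hN : Fintype.card A = N) (hA : 2 ≤ N)
    (u w : List A) (n m h : ℕ)
    (hn : u.length = n) (hm : w.length = m) (hmn : m ≤ n)
    (hh : hamming u w = h) :
    {v : List A | v.length = n ∧ hamming u v = n ∧
        hamming u w + hamming v w = w.length}.ncard = (N - 1) ^ (n - h) := by
  subst hN hn hm hh
  exact opp_card u w hmn
end
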